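/- arXiv:1906.00135 — 2 statements merged into one kernel-verified Lean document; each statement's English description precedes it below -/
import Mathlib

section
/- Let G be a finite simple graph with at least one vertex, let p ∈ (0,1], and let v be a vertex of maximum degree in G. Then there exists a γ_p-set S of G containing a vertex at distance at most 2 from v; that is, S contains v, a neighbor of v, or a distance-two neighbor of v (equivalently, S ∩ N[N[v]] ≠ ∅). -/
open SimpleGraph

/-- The closed neighborhood `N[S]` of a set of vertices `S`:
all vertices equal or adjacent to some vertex of `S`. -/
def closedNbhd {V : Type*} (G : SimpleGraph V) (S : Set V) : Set V :=
  {w | ∃ u ∈ S, w = u ∨ G.Adj u w}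

/-- `S` is a `p`-dominating set of `G` if `N[S]` contains at least a proportion `p`
of the vertices. -/
def IsPDomSet {V : Type*} [Fintype V] (G : SimpleGraph V) (p : ℝ) (S : Set V) : Prop :=
  p * (Fintype.card V : ℝ) ≤ ((closedNbhd G S).ncard : ℝ)

/-- The `p`-domination number `γ_p(G)`: the minimum cardinality of a `p`-dominating set. -/
noncomputable def pDomNum {V : Type*} [Fintype V] (G : SimpleGraph V) (p : ℝ) : ℕ :=
  sInf {k : ℕ | ∃ S : Set V, IsPDomSet G p S ∧ S.ncard = k}

/-- `S` is a `γ_p`-set: a `p`-dominating set of minimum cardinality `γ_p(G)`. -/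
def IsGammaPSet {V : Type*} [Fintype V] (G : SimpleGraph V) (p : ℝ) (S : Set V) : Prop :=
  IsPDomSet G p S ∧ S.ncard = pDomNum G p

/-- `v` belongs to the `p`-influencing set of `G`, i.e. the union of all `γ_p`-sets. -/
def InInfluence {V : Type*} [Fintype V] (G : SimpleGraph V) (p : ℝ) (v : V) : Prop :=
  ∃ S : Set V, IsGammaPSet G p S ∧ v ∈ S

/-! A `γ_p`-set `S` is nonempty, since `p * |V| > 0`. If it misses `N[N[v]]`, then exchanging any
`u ∈ S` for `v` yields another `γ_p`-set: the size does not change, and since `S` stays at distance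
at least three from `v`, the sets `N[S \ {u}]` and `N[v]` are disjoint. Hence the new set dominates
`|N[S \ {u}]| + |N[v]|` vertices, while `S` dominates at most `|N[S \ {u}]| + |N[u]|`, and
`|N[u]| ≤ |N[v]|` because `v` has maximum degree. -/

section ClosedNbhd

variable {V : Type*} (G : SimpleGraph V)

lemma subset_closedNbhd (S : Set V) : S ⊆ closedNbhd G S :=
  fun u hu => ⟨u, hu, Or.inl rfl⟩

lemma closedNbhd_empty : closedNbhd G ∅ = ∅ := by
  simp [closedNbhd]

lemma closedNbhd_univ : closedNbhd G Set.univ = Set.univ :=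
  Set.univ_subset_iff.mp (subset_closedNbhd G Set.univ)

lemma closedNbhd_singleton (u : V) : closedNbhd G {u} = insert u (G.neighborSet u) := by
  ext w
  simp [closedNbhd]

lemma closedNbhd_insert (u : V) (S : Set V) :
    closedNbhd G (insert u S) = closedNbhd G {u} ∪ closedNbhd G S := by
  ext w
  simp [closedNbhd]

lemma mem_closedNbhd_closedNbhd_singleton (v : V) : v ∈ closedNbhd G (closedNbhd G {v}) :=
  subset_closedNbhd G _ (subset_closedNbhd G _ (Set.mem_singleton v))

lemma encard_closedNbhd_singleton (u : V) :
    (closedNbhd G {u}).encard = (G.neighborSet u).encard + 1 := by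
  rw [closedNbhd_singleton, Set.encard_insert_of_notMem G.notMem_neighborSet_self]

lemma disjoint_closedNbhd_closedNbhd_iff {S T : Set V} :
    Disjoint (closedNbhd G S) (closedNbhd G T) ↔ Disjoint S (closedNbhd G (closedNbhd G T)) := by
  simp only [Set.disjoint_left]
  constructor
  · rintro h x hx ⟨w, hw, hwx⟩
    exact h ⟨x, hx, hwx.imp Eq.symm Adj.symm⟩ hw
  · rintro h w ⟨x, hx, hxw⟩ hw
    exact h hx ⟨w, hw, hxw.imp Eq.symm Adj.symm⟩

variable {G} in
lemma encard_closedNbhd_le_exchange {S : Set V} {u v : V} (hu : u ∈ S)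
    (hS : Disjoint S (closedNbhd G (closedNbhd G {v})))
    (hdeg : (G.neighborSet u).encard ≤ (G.neighborSet v).encard) :
    (closedNbhd G S).encard ≤ (closedNbhd G (insert v (S \ {u}))).encard := by
  have hdisj : Disjoint (closedNbhd G {v}) (closedNbhd G (S \ {u})) :=
    ((disjoint_closedNbhd_closedNbhd_iff G).mpr (hS.mono_left Set.sdiff_subset)).symm
  calc (closedNbhd G S).encard
      = (closedNbhd G {u} ∪ closedNbhd G (S \ {u})).encard := by
        rw [← closedNbhd_insert, Set.insert_sdiff_self_of_mem hu]
    _ ≤ (closedNbhd G {u}).encard + (closedNbhd G (S \ {u})).encard := Set.encard_union_le _ _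
    _ ≤ (closedNbhd G {v}).encard + (closedNbhd G (S \ {u})).encard := by
        simp only [encard_closedNbhd_singleton]
        gcongr
    _ = (closedNbhd G (insert v (S \ {u}))).encard := by
        rw [closedNbhd_insert, Set.encard_union_eq hdisj]

end ClosedNbhd

section PDomination

variable {V : Type*} [Fintype V] {G : SimpleGraph V} {p : ℝ} {S T : Set V}

lemma IsPDomSet.of_encard_le (hS : IsPDomSet G p S)
    (hST : (closedNbhd G S).encard ≤ (closedNbhd G T).encard) : IsPDomSet G p T :=
  hS.trans (Nat.cast_le.mpr (ENat.toNat_le_toNat hST (Set.toFinite _).encard_lt_top.ne))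

lemma isPDomSet_univ (G : SimpleGraph V) (hp : p ≤ 1) : IsPDomSet G p Set.univ := by
  rw [IsPDomSet, closedNbhd_univ, Set.ncard_univ, Nat.card_eq_fintype_card]
  exact mul_le_of_le_one_left (Nat.cast_nonneg _) hp

lemma IsPDomSet.nonempty [Nonempty V] (hS : IsPDomSet G p S) (hp : 0 < p) : S.Nonempty := by
  rw [Set.nonempty_iff_ne_empty]
  rintro rfl
  have hpos : 0 < p * (Fintype.card V : ℝ) := mul_pos hp (Nat.cast_pos.mpr Fintype.card_pos)
  rw [IsPDomSet, closedNbhd_empty, Set.ncard_empty, Nat.cast_zero] at hS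
  exact hS.not_gt hpos

lemma exists_isGammaPSet (G : SimpleGraph V) (hp : p ≤ 1) : ∃ S : Set V, IsGammaPSet G p S :=
  Nat.sInf_mem (s := {k | ∃ S : Set V, IsPDomSet G p S ∧ S.ncard = k})
    ⟨_, Set.univ, isPDomSet_univ G hp, rfl⟩

lemma IsGammaPSet.exchange {u v : V} (hS : IsGammaPSet G p S) (hu : u ∈ S)
    (hdisj : Disjoint S (closedNbhd G (closedNbhd G {v})))
    (hdeg : (G.neighborSet u).ncard ≤ (G.neighborSet v).ncard) :
    IsGammaPSet G p (insert v (S \ {u})) := by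
  have hvS : v ∉ S := fun hv =>
    Set.disjoint_left.mp hdisj hv (mem_closedNbhd_closedNbhd_singleton G v)
  have hdeg' : (G.neighborSet u).encard ≤ (G.neighborSet v).encard := by
    rwa [← (Set.toFinite _).cast_ncard_eq, ← (Set.toFinite _).cast_ncard_eq, Nat.cast_le]
  exact ⟨hS.1.of_encard_le (encard_closedNbhd_le_exchange hu hdisj hdeg'),
    (Set.ncard_exchange hvS hu).trans hS.2⟩

end PDomination

theorem stmt7 {V : Type*} [Fintype V] [Nonempty V] (G : SimpleGraph V)
    (p : ℝ) (hp0 : 0 < p) (hp1 : p ≤ 1) (v : V)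
    (hv : ∀ u : V, (G.neighborSet u).ncard ≤ (G.neighborSet v).ncard) :
    ∃ S : Set V, IsGammaPSet G p S ∧
      (S ∩ closedNbhd G (closedNbhd G {v})).Nonempty := by
  obtain ⟨S, hS⟩ := exists_isGammaPSet G hp1
  by_cases hdisj : Disjoint S (closedNbhd G (closedNbhd G {v}))
  · obtain ⟨u, hu⟩ := hS.1.nonempty hp0
    exact ⟨insert v (S \ {u}), hS.exchange hu hdisj (hv u), v, Set.mem_insert _ _,
      mem_closedNbhd_closedNbhd_singleton G v⟩
  · exact ⟨S, hS, Set.not_disjoint_iff_nonempty_inter.mp hdisj⟩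
end

section
/- Let P_n be the path with vertices v_1, …, v_n (v_i adjacent to v_{i+1}), where n ≥ 4 and n ≡ 1 (mod 3). Then: (i) for every integer k ≥ 0 with (3k+1)/n ≤ 1, the p-influencing set of P_n for p = (3k+1)/n and for p = (3k+2)/n (when (3k+2)/n ≤ 1) is the whole vertex set {v_1, …, v_n}; (ii) for every integer k ≥ 1 with 3k ≤ n − 4, the p-influencing set of P_n for p = 3k/n is {v_2, v_3, …, v_{n−1}}; and (iii) for p = (n−1)/n, the p-influencing set of P_n is {v_1, …, v_n} \ {v_1, v_4, v_7, …, v_n} (the vertices v_i with i ≢ 1 (mod 3)). -/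
/-!
A closed neighbourhood in a path has at most three vertices, so `|N[S]| ≤ 3|S|`, and a set covering
`t` vertices with `⌈t/3⌉` members is a `γ`-set for the threshold `t`. Arithmetic progressions of
difference `3` do this: their neighbourhoods are runs of consecutive vertices, and sliding a
progression makes it pass through a prescribed vertex.

For the threshold `t = 3k`, a `γ`-set has to attain `|N[S]| = 3|S|`, i.e. its members have pairwise
disjoint closed neighbourhoods of three vertices each. This excludes the ends of the path. If
`n = 3|S| + 1`, then only one vertex stays uncovered. But if `3j ∈ S` (counting from `0`), then the
`3j - 1` vertices to the left and the `n - 3j - 2` vertices to the right of `N[3j]` are covered by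
disjoint triples, none of which has vertices on both sides; both numbers are `2 (mod 3)`, so at
least two vertices on each side stay uncovered.
-/

open SimpleGraph

section ClosedNbhd

variable {V : Type*} {G : SimpleGraph V} {S T : Set V} {d : ℕ}

lemma closedNbhd_union (G : SimpleGraph V) (S T : Set V) :
    closedNbhd G (S ∪ T) = closedNbhd G S ∪ closedNbhd G T := by
  ext w
  simp only [closedNbhd, Set.mem_ofPred_eq, Set.mem_union, or_and_right, exists_or]

lemma closedNbhd_mono (h : S ⊆ T) : closedNbhd G S ⊆ closedNbhd G T :=
  fun _ ⟨u, hu, hw⟩ => ⟨u, h hu, hw⟩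

variable [Finite V]

lemma ncard_closedNbhd_le_mul (hd : ∀ u, (closedNbhd G {u}).ncard ≤ d) (S : Set V) :
    (closedNbhd G S).ncard ≤ d * S.ncard := by
  induction S, S.toFinite using Set.Finite.induction_on with
  | empty => simp [closedNbhd]
  | @insert a S ha _ ih =>
    calc (closedNbhd G (insert a S)).ncard
        ≤ (closedNbhd G {a}).ncard + (closedNbhd G S).ncard := by
          rw [Set.insert_eq, closedNbhd_union]
          exact Set.ncard_union_le _ _
      _ ≤ d + d * S.ncard := add_le_add (hd a) ih
      _ = d * (insert a S).ncard := by rw [Set.ncard_insert_of_notMem ha]; ring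

lemma mul_ncard_le_ncard_closedNbhd_of_subset (hd : ∀ u, (closedNbhd G {u}).ncard ≤ d)
    (hS : d * S.ncard ≤ (closedNbhd G S).ncard) (hTS : T ⊆ S) :
    d * T.ncard ≤ (closedNbhd G T).ncard := by
  have hcard : d * S.ncard = d * (S \ T).ncard + d * T.ncard := by
    rw [← Set.ncard_sdiff_add_ncard_of_subset hTS, mul_add]
  have hunion := Set.ncard_union_le (closedNbhd G T) (closedNbhd G (S \ T))
  rw [← closedNbhd_union, Set.union_sdiff_cancel hTS] at hunion
  have hsdiff := ncard_closedNbhd_le_mul hd (S \ T)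
  omega

lemma disjoint_closedNbhd_sdiff (hd : ∀ u, (closedNbhd G {u}).ncard ≤ d)
    (hS : d * S.ncard ≤ (closedNbhd G S).ncard) (hTS : T ⊆ S) :
    Disjoint (closedNbhd G T) (closedNbhd G (S \ T)) := by
  have hcard : d * S.ncard = d * (S \ T).ncard + d * T.ncard := by
    rw [← Set.ncard_sdiff_add_ncard_of_subset hTS, mul_add]
  have hunion := Set.ncard_union_add_ncard_inter (closedNbhd G T) (closedNbhd G (S \ T))
  rw [← closedNbhd_union, Set.union_sdiff_cancel hTS] at hunion
  have hT := ncard_closedNbhd_le_mul hd T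
  have hsdiff := ncard_closedNbhd_le_mul hd (S \ T)
  rw [Set.disjoint_iff_inter_eq_empty, ← Set.ncard_eq_zero]
  omega

end ClosedNbhd

section GammaPSet

variable {V : Type*} [Fintype V] {G : SimpleGraph V} {S T : Set V} {p : ℝ} {d t : ℕ}

lemma isPDomSet_iff_le_ncard (hp : p * Fintype.card V = t) :
    IsPDomSet G p S ↔ t ≤ (closedNbhd G S).ncard := by
  rw [IsPDomSet, hp, Nat.cast_le]

lemma IsPDomSet.pDomNum_le (hS : IsPDomSet G p S) : pDomNum G p ≤ S.ncard :=
  Nat.sInf_le ⟨S, hS, rfl⟩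

lemma isGammaPSet_of_mul_ncard_lt (hd : ∀ u, (closedNbhd G {u}).ncard ≤ d)
    (hp : p * Fintype.card V = t) (hS : t ≤ (closedNbhd G S).ncard)
    (hlt : d * S.ncard < t + d) : IsGammaPSet G p S := by
  have hdom : IsPDomSet G p S := (isPDomSet_iff_le_ncard hp).2 hS
  refine ⟨hdom, le_antisymm (le_csInf ⟨_, S, hdom, rfl⟩ ?_) hdom.pDomNum_le⟩
  rintro _ ⟨T, hT, rfl⟩
  have h : d * S.ncard < d * (T.ncard + 1) :=
    calc d * S.ncard < t + d := hlt
      _ ≤ d * T.ncard + d :=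
        Nat.add_le_add_right
          (((isPDomSet_iff_le_ncard hp).1 hT).trans (ncard_closedNbhd_le_mul hd T)) d
      _ = d * (T.ncard + 1) := by ring
  exact Nat.lt_succ_iff.1 (Nat.lt_of_mul_lt_mul_left h)

lemma IsGammaPSet.mul_ncard_le_ncard_closedNbhd (hS : IsGammaPSet G p S)
    (hp : p * Fintype.card V = t) (hT : t ≤ (closedNbhd G T).ncard) (hTt : d * T.ncard ≤ t) :
    d * S.ncard ≤ (closedNbhd G S).ncard :=
  calc d * S.ncard ≤ d * T.ncard := by
        rw [hS.2]
        exact Nat.mul_le_mul_left d ((isPDomSet_iff_le_ncard hp).2 hT).pDomNum_le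
    _ ≤ t := hTt
    _ ≤ (closedNbhd G S).ncard := (isPDomSet_iff_le_ncard hp).1 hS.1

end GammaPSet

section PathGraph

variable {n : ℕ}

lemma ncard_val_preimage_Ico (n lo hi : ℕ) :
    (Fin.val (n := n) ⁻¹' Set.Ico lo hi).ncard = min hi n - lo := by
  have himage : Fin.val '' (Fin.val (n := n) ⁻¹' Set.Ico lo hi) = Set.Ico lo (min hi n) := by
    rw [Set.image_preimage_eq_inter_range, Fin.range_val, ← Set.Ico_inter_Iio]
  rw [← Set.ncard_image_of_injective _ Fin.val_injective, himage, ← Finset.coe_Ico,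
    Set.ncard_coe_finset, Nat.card_Ico]

lemma mem_closedNbhd_pathGraph {S : Set (Fin n)} {w : Fin n} :
    w ∈ closedNbhd (pathGraph n) S ↔
      ∃ u ∈ S, u.val ≤ w.val + 1 ∧ w.val ≤ u.val + 1 := by
  simp only [closedNbhd, Set.mem_ofPred_eq, pathGraph_adj, Fin.ext_iff]
  exact exists_congr fun u => and_congr_right fun _ => by omega

lemma ncard_closedNbhd_pathGraph_singleton (u : Fin n) :
    (closedNbhd (pathGraph n) {u}).ncard = min (u.val + 2) n - (u.val - 1) := by
  rw [← ncard_val_preimage_Ico]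
  congr 1
  ext w
  simp only [mem_closedNbhd_pathGraph, Set.mem_singleton_iff, exists_eq_left, Set.mem_preimage,
    Set.mem_Ico]
  omega

lemma ncard_closedNbhd_pathGraph_singleton_le (u : Fin n) :
    (closedNbhd (pathGraph n) {u}).ncard ≤ 3 := by
  rw [ncard_closedNbhd_pathGraph_singleton]
  omega

/-- The vertices `v_a, v_{a+3}, …, v_{a+3(k-1)}` in the 1-based numbering of the paper, where
`v_0` and `v_{n+1}` are read as `v_1` and `v_n`. These are the sets used as `γ_p`-sets. -/
def pathProgression (n a k : ℕ) : Set (Fin n) :=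
  {x | ∃ i < k, x.val = min (a + 3 * i - 1) (n - 1)}

lemma ncard_pathProgression_le (n a k : ℕ) : (pathProgression n a k).ncard ≤ k := by
  have hsub : Fin.val '' pathProgression n a k ⊆
      (Finset.range k).image fun i => min (a + 3 * i - 1) (n - 1) := by
    rintro _ ⟨x, ⟨i, hi, hx⟩, rfl⟩
    exact Finset.mem_image.2 ⟨i, Finset.mem_range.2 hi, hx.symm⟩
  calc (pathProgression n a k).ncard = (Fin.val '' pathProgression n a k).ncard :=
        (Set.ncard_image_of_injective _ Fin.val_injective).symm
    _ ≤ ((Finset.range k).image fun i => min (a + 3 * i - 1) (n - 1)).card := by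
        rw [← Set.ncard_coe_finset]
        exact Set.ncard_le_ncard hsub (Finset.finite_toSet _)
    _ ≤ k := Finset.card_image_le.trans (Finset.card_range k).le

lemma le_ncard_closedNbhd_pathProgression (n a k : ℕ) :
    min (a + 3 * k - 2) n - (a - 2) ≤
      (closedNbhd (pathGraph n) (pathProgression n a k)).ncard := by
  rw [← ncard_val_preimage_Ico]
  refine Set.ncard_le_ncard fun x hx => mem_closedNbhd_pathGraph.2 ?_
  obtain ⟨hlo, hhi⟩ := Set.mem_Ico.1 hx
  have hi : (x.val + 2 - a) / 3 < k := by omega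
  refine ⟨⟨min (a + 3 * ((x.val + 2 - a) / 3) - 1) (n - 1), by omega⟩, ⟨_, hi, rfl⟩, ?_⟩
  dsimp only
  omega

lemma exists_mem_pathProgression {lo hi k : ℕ} {v : Fin n} (hlo : lo ≤ v.val + 1)
    (hhi : v.val + 1 ≤ hi) (hfit : lo + (v.val + 1 - lo) % 3 + 3 * k ≤ hi) :
    ∃ a, lo ≤ a ∧ a + 3 * k ≤ hi ∧ v ∈ pathProgression n a (k + 1) := by
  rcases Nat.le_total ((v.val + 1 - lo) / 3) k with h | h
  · exact ⟨lo + (v.val + 1 - lo) % 3, by omega, hfit, (v.val + 1 - lo) / 3, by omega, by omega⟩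
  · exact ⟨v.val + 1 - 3 * k, by omega, by omega, k, by omega, by omega⟩

variable {k : ℕ} {p : ℝ} {v : Fin n}

-- A progression with `k + 1` members covers the whole path, or else `3k + 3` vertices less one for
-- touching `v_1` or `v_n` and less two for touching `v_0` or `v_{n+1}`. Keeping it at distance at
-- least `e` from `v_0` and `v_{n+1}` guarantees `3k + 1 + e` vertices.
lemma inInfluence_pathGraph_of_margin {e : ℕ} (he : e ≤ 2)
    (hp : p * n = (3 * k + 1 + e : ℕ)) (hn : 3 * k + 1 + e ≤ n) (hlo : e ≤ v.val + 1)
    (hhi : v.val + e ≤ n) (hfit : 2 * e + (v.val + 1 - e) % 3 + 3 * k ≤ n + 1) :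
    InInfluence (pathGraph n) p v := by
  obtain ⟨a, hae, hak, hv⟩ :=
    exists_mem_pathProgression (hi := n + 1 - e) hlo (by omega) (by omega : _ + 3 * k ≤ _)
  have hcover := le_ncard_closedNbhd_pathProgression n a (k + 1)
  have hcard := ncard_pathProgression_le n a (k + 1)
  refine ⟨_, isGammaPSet_of_mul_ncard_lt ncard_closedNbhd_pathGraph_singleton_le ?_
    (show 3 * k + 1 + e ≤ _ by omega) (by omega), hv⟩
  rwa [Fintype.card_fin]

lemma three_mul_ncard_le_of_isGammaPSet {S : Set (Fin n)} (hp : p * n = (3 * k : ℕ))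
    (hk : 3 * k ≤ n) (hS : IsGammaPSet (pathGraph n) p S) :
    3 * S.ncard ≤ (closedNbhd (pathGraph n) S).ncard := by
  have hcover := le_ncard_closedNbhd_pathProgression n 2 k
  have hcard := ncard_pathProgression_le n 2 k
  refine hS.mul_ncard_le_ncard_closedNbhd (t := 3 * k) ?_ (by omega)
    (Nat.mul_le_mul_left 3 hcard)
  rwa [Fintype.card_fin]

lemma interior_of_three_mul_ncard_le {S : Set (Fin n)}
    (hS : 3 * S.ncard ≤ (closedNbhd (pathGraph n) S).ncard) (hv : v ∈ S) :
    1 ≤ v.val ∧ v.val ≤ n - 2 := by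
  have h := mul_ncard_le_ncard_closedNbhd_of_subset ncard_closedNbhd_pathGraph_singleton_le hS
    (Set.singleton_subset_iff.2 hv)
  rw [Set.ncard_singleton, ncard_closedNbhd_pathGraph_singleton] at h
  omega

lemma lt_or_lt_of_mem_closedNbhd_sdiff_singleton {S : Set (Fin n)} {x : Fin n}
    (hS : 3 * S.ncard ≤ (closedNbhd (pathGraph n) S).ncard) (hv : v ∈ S)
    (hx : x ∈ closedNbhd (pathGraph n) (S \ {v})) : x.val + 1 < v.val ∨ v.val + 1 < x.val := by
  have hdisj := disjoint_closedNbhd_sdiff ncard_closedNbhd_pathGraph_singleton_le hS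
    (Set.singleton_subset_iff.2 hv)
  by_contra hnear
  exact hdisj.notMem_of_mem_right hx (mem_closedNbhd_pathGraph.2 ⟨v, rfl, by omega⟩)

lemma three_mul_ncard_le_of_closedNbhd_subset_Ico {S T : Set (Fin n)} {lo hi : ℕ}
    (hS : 3 * S.ncard ≤ (closedNbhd (pathGraph n) S).ncard) (hTS : T ⊆ S)
    (hT : ∀ x ∈ closedNbhd (pathGraph n) T, x.val ∈ Set.Ico lo hi) :
    3 * T.ncard ≤ min hi n - lo :=
  calc 3 * T.ncard ≤ (closedNbhd (pathGraph n) T).ncard :=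
        mul_ncard_le_ncard_closedNbhd_of_subset ncard_closedNbhd_pathGraph_singleton_le hS hTS
    _ ≤ (Fin.val (n := n) ⁻¹' Set.Ico lo hi).ncard := Set.ncard_le_ncard hT
    _ = min hi n - lo := ncard_val_preimage_Ico n lo hi

lemma three_mul_ncard_left_le {S : Set (Fin n)}
    (hS : 3 * S.ncard ≤ (closedNbhd (pathGraph n) S).ncard) (hv : v ∈ S) :
    3 * {x ∈ S | x < v}.ncard ≤ v.val - 1 := by
  have hsub : {x ∈ S | x < v} ⊆ S \ {v} := fun x hx => ⟨hx.1, hx.2.ne⟩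
  refine (three_mul_ncard_le_of_closedNbhd_subset_Ico (lo := 0) (hi := v.val - 1) hS
    (Set.sep_subset _ _) fun x hx => ?_).trans (by omega)
  have hfar := lt_or_lt_of_mem_closedNbhd_sdiff_singleton hS hv (closedNbhd_mono hsub hx)
  obtain ⟨u, ⟨-, huv⟩, hux⟩ := mem_closedNbhd_pathGraph.1 hx
  rw [Fin.lt_def] at huv
  exact Set.mem_Ico.2 (by omega)

lemma three_mul_ncard_right_le {S : Set (Fin n)}
    (hS : 3 * S.ncard ≤ (closedNbhd (pathGraph n) S).ncard) (hv : v ∈ S) :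
    3 * {x ∈ S | v < x}.ncard ≤ n - (v.val + 2) := by
  have hsub : {x ∈ S | v < x} ⊆ S \ {v} := fun x hx => ⟨hx.1, hx.2.ne'⟩
  refine (three_mul_ncard_le_of_closedNbhd_subset_Ico (lo := v.val + 2) (hi := n) hS
    (Set.sep_subset _ _) fun x hx => ?_).trans (by omega)
  have hfar := lt_or_lt_of_mem_closedNbhd_sdiff_singleton hS hv (closedNbhd_mono hsub hx)
  obtain ⟨u, ⟨-, huv⟩, hux⟩ := mem_closedNbhd_pathGraph.1 hx
  rw [Fin.lt_def] at huv
  exact Set.mem_Ico.2 (by omega)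

lemma three_mul_ncard_add_four_le {S : Set (Fin n)}
    (hS : 3 * S.ncard ≤ (closedNbhd (pathGraph n) S).ncard) (hv : v ∈ S)
    (hn : n % 3 = 1) (hmod : v.val % 3 = 0) : 3 * S.ncard + 4 ≤ n := by
  have hsplit : S \ {v} = {x ∈ S | x < v} ∪ {x ∈ S | v < x} := by
    ext x
    simp only [Set.mem_sdiff, Set.mem_singleton_iff, Set.mem_union, Set.mem_ofPred_eq,
      ← and_or_left, ← ne_iff_lt_or_gt, ne_eq]
  have hsum := Set.ncard_union_le {x ∈ S | x < v} {x ∈ S | v < x}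
  rw [← hsplit] at hsum
  have hcard := Set.ncard_sdiff_singleton_add_one hv
  have hleft := three_mul_ncard_left_le hS hv
  have hright := three_mul_ncard_right_le hS hv
  have hinterior := interior_of_three_mul_ncard_le hS hv
  omega

lemma inInfluence_pathGraph_three_mul_iff (hp : p * n = (3 * k : ℕ)) (hk : 1 ≤ k)
    (hkn : 3 * k + 2 ≤ n) : InInfluence (pathGraph n) p v ↔ 1 ≤ v.val ∧ v.val ≤ n - 2 := by
  constructor
  · rintro ⟨S, hS, hv⟩
    exact interior_of_three_mul_ncard_le (three_mul_ncard_le_of_isGammaPSet hp (by omega) hS) hv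
  · rintro ⟨hv1, hv2⟩
    obtain ⟨k, rfl⟩ := Nat.exists_eq_add_of_le' hk
    exact inInfluence_pathGraph_of_margin (e := 2) le_rfl hp (by omega) (by omega)
      (by omega) (by omega)

lemma inInfluence_pathGraph_sub_one_iff (hp : p * n = (3 * k : ℕ)) (hkn : n = 3 * k + 1) :
    InInfluence (pathGraph n) p v ↔ v.val % 3 ≠ 0 := by
  constructor
  · rintro ⟨S, hS, hv⟩ hmod
    have hcard := three_mul_ncard_add_four_le
      (three_mul_ncard_le_of_isGammaPSet hp (by omega) hS) hv (by omega) hmod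
    have hcover : 3 * k ≤ (closedNbhd (pathGraph n) S).ncard :=
      (isPDomSet_iff_le_ncard (by rwa [Fintype.card_fin])).1 hS.1
    have hle := ncard_closedNbhd_le_mul ncard_closedNbhd_pathGraph_singleton_le S
    omega
  · intro hmod
    obtain ⟨k, rfl⟩ := Nat.exists_eq_add_of_le' (show 1 ≤ k by omega)
    exact inInfluence_pathGraph_of_margin (e := 2) le_rfl hp (by omega) (by omega)
      (by omega) (by omega)

end PathGraph

theorem stmt17_general (n : ℕ) :
    (∀ k : ℕ, 3 * k + 1 ≤ n →
      ∀ v : Fin n, InInfluence (pathGraph n) ((3 * k + 1 : ℝ) / (n : ℝ)) v) ∧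
    (∀ k : ℕ, 3 * k + 3 ≤ n →
      ∀ v : Fin n, InInfluence (pathGraph n) ((3 * k + 2 : ℝ) / (n : ℝ)) v) ∧
    (∀ k : ℕ, 1 ≤ k → 3 * k + 2 ≤ n →
      ∀ v : Fin n, InInfluence (pathGraph n) ((3 * k : ℝ) / (n : ℝ)) v ↔
        1 ≤ v.val ∧ v.val ≤ n - 2) ∧
    (n % 3 = 1 → ∀ v : Fin n, InInfluence (pathGraph n) (((n : ℝ) - 1) / (n : ℝ)) v ↔
      v.val % 3 ≠ 0) := by
  have hp (v : Fin n) (x : ℝ) : x / n * n = x :=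
    div_mul_cancel₀ x (Nat.cast_ne_zero.2 v.pos.ne')
  refine ⟨fun k hk v => ?_, fun k hk v => ?_, fun k hk hkn v => ?_, fun hmod v => ?_⟩
  · exact inInfluence_pathGraph_of_margin (k := k) (e := 0) (by omega)
      (by rw [hp v]; push_cast; ring) (by omega) (by omega) (by omega) (by omega)
  · exact inInfluence_pathGraph_of_margin (k := k) (e := 1) (by omega)
      (by rw [hp v]; push_cast; ring) (by omega) (by omega) (by omega) (by omega)
  · exact inInfluence_pathGraph_three_mul_iff (by rw [hp v]; push_cast; ring) hk hkn
  · have hn : n = 3 * (n / 3) + 1 := by omega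
    refine inInfluence_pathGraph_sub_one_iff (k := n / 3) ?_ hn
    rw [hp v, sub_eq_iff_eq_add]
    exact_mod_cast hn

/-- For `P_n` with `n ≡ 1 (mod 3)`.  Vertices of `pathGraph n` are `Fin n`,
with `v_i` (1-based) corresponding to the index `i - 1` (0-based); in particular
`v_i` with `i ≡ 1 (mod 3)` corresponds to `v.val ≡ 0 (mod 3)`. -/
theorem stmt17 (n : ℕ) (hn : 4 ≤ n) (hmod : n % 3 = 1) :
    (∀ k : ℕ, 3 * k + 1 ≤ n →
      ((∀ v : Fin n, InInfluence (pathGraph n) ((3 * k + 1 : ℝ) / (n : ℝ)) v) ∧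
        (3 * k + 2 ≤ n →
          ∀ v : Fin n, InInfluence (pathGraph n) ((3 * k + 2 : ℝ) / (n : ℝ)) v))) ∧
    (∀ k : ℕ, 1 ≤ k → 3 * k ≤ n - 4 →
      ∀ v : Fin n, InInfluence (pathGraph n) ((3 * k : ℝ) / (n : ℝ)) v ↔
        1 ≤ v.val ∧ v.val ≤ n - 2) ∧
    (∀ v : Fin n, InInfluence (pathGraph n) (((n : ℝ) - 1) / (n : ℝ)) v ↔
      v.val % 3 ≠ 0) := by
  obtain ⟨hone, htwo, hzero, hlast⟩ := stmt17_general n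
  exact ⟨fun k hk => ⟨hone k hk, fun hk2 => htwo k (by omega)⟩,
    fun k hk hkn => hzero k hk (by omega), hlast hmod⟩
end
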